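/- arXiv:1506.06041 — 2 statements merged into one kernel-verified Lean document; each statement's English description precedes it below -/
import Mathlib

section
/- Let G be a Δ-regular finite simple graph of order n ≥ 1. Then the alliance polynomial A(G;x) has exactly Δ+1 nonzero coefficients: A(G;x) = Σ_{i=0}^{Δ} A_{Δ−2i}(G) x^{n+Δ−2i} with A_{−Δ}(G) = n, A_Δ(G) ≥ 1, and if Δ > 0 then for every 1 ≤ i ≤ Δ−1 one has A_{Δ−2i}(G) ≥ n·C(Δ,i)/min{Δ, n−i}, where C(Δ,i) is the binomial coefficient. -/
open Polynomial Finset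

/-- Number of neighbors of `v` inside the set `S` (denoted δ_S(v)). -/
def SimpleGraph.degIn {V : Type*} [Fintype V] [DecidableEq V]
    (G : SimpleGraph V) [DecidableRel G.Adj] (S : Finset V) (v : V) : ℕ :=
  (S.filter (fun u => G.Adj v u)).card

/-- Number of neighbors of `v` outside the set `S` (denoted δ_{S̄}(v)). -/
def SimpleGraph.degOut {V : Type*} [Fintype V] [DecidableEq V]
    (G : SimpleGraph V) [DecidableRel G.Adj] (S : Finset V) (v : V) : ℕ :=
  (Sᶜ.filter (fun u => G.Adj v u)).card

/-- `S` is an exact defensive `k`-alliance in `G`: the induced subgraph `⟨S⟩` is connected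
(in particular `S` is nonempty) and `k = k_S = min_{v ∈ S} (δ_S(v) - δ_{S̄}(v))`. -/
def SimpleGraph.IsExactAlliance {V : Type*} [Fintype V] [DecidableEq V]
    (G : SimpleGraph V) [DecidableRel G.Adj] (S : Finset V) (k : ℤ) : Prop :=
  (G.induce (S : Set V)).Connected ∧
    (∀ v ∈ S, k ≤ (G.degIn S v : ℤ) - (G.degOut S v : ℤ)) ∧
    (∃ v ∈ S, (G.degIn S v : ℤ) - (G.degOut S v : ℤ) = k)

/-- `A_k(G)`: the number of exact defensive `k`-alliances in `G`. -/
noncomputable def SimpleGraph.allianceCoeff {V : Type*} [Fintype V] [DecidableEq V]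
    (G : SimpleGraph V) [DecidableRel G.Adj] (k : ℤ) : ℕ :=
  Set.ncard {S : Finset V | G.IsExactAlliance S k}

/-- The alliance polynomial `A(G;x) = Σ_{k=-Δ}^{Δ} A_k(G) x^{n+k}`, where `n` is the order and
`Δ` the maximum degree of `G`, regarded as a real polynomial. -/
noncomputable def SimpleGraph.alliancePoly {V : Type*} [Fintype V] [DecidableEq V]
    (G : SimpleGraph V) [DecidableRel G.Adj] : Polynomial ℝ :=
  ∑ k ∈ Finset.Icc (-(G.maxDegree : ℤ)) (G.maxDegree : ℤ),
    (G.allianceCoeff k : ℝ) • X ^ (((Fintype.card V : ℤ) + k).toNat)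

/-!
Since `δ_S(v) - δ_{S̄}(v) = deg v - 2 δ_{S̄}(v)`, an exact `k`-alliance in a `Δ`-regular graph has
`k = Δ - 2i` with `0 ≤ i ≤ Δ`. Conversely, fix a vertex `v` of minimum degree `δ` and a set `U` of
`i` neighbors of `v`, and let `S` be the connected component of `v` in `G - U`. Every edge leaving
`S` ends in `U`, and `v` is adjacent to all of `U`; so the minimum of `δ_S - δ_{S̄}` over `S` is
attained at `v` and `S` is an exact defensive `(δ - 2i)`-alliance.

Moreover `U` is recovered from `S` as the set of vertices outside `S` with a neighbor in `S`. The
pairs `(v, U)` giving rise to `S` are thus determined by `v`, which lies in `S` and is adjacent to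
all of `U`; there are at most `n - i` such vertices, and at most `Δ` of them when `i > 0`.
-/

namespace DefensiveAlliance

section ComponentAvoiding

variable {V : Type*} [Fintype V] (G : SimpleGraph V) {U : Finset V} {v w : V}

open Classical in
/-- The vertex set of the connected component of `v` in the vertex-deleted subgraph `G - U`. The
vertices of `U` are kept as isolated vertices, so that `v` ranges over all of `V`; for `v ∈ U` the
value is `{v}`. -/
noncomputable def componentAvoiding (U : Finset V) (v : V) : Finset V :=
  ((G.induce (U : Set V)ᶜ).spanningCoe.connectedComponentMk v).supp.toFinset

lemma coe_componentAvoiding : (componentAvoiding G U v : Set V) =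
    ((G.induce (U : Set V)ᶜ).spanningCoe.connectedComponentMk v).supp := by
  simp [componentAvoiding]

lemma mem_componentAvoiding :
    w ∈ componentAvoiding G U v ↔ (G.induce (U : Set V)ᶜ).spanningCoe.Reachable w v := by
  simp [componentAvoiding]

lemma self_mem_componentAvoiding : v ∈ componentAvoiding G U v :=
  (mem_componentAvoiding G).2 .rfl

lemma connected_induce_componentAvoiding :
    (G.induce (componentAvoiding G U v : Set V)).Connected := by
  rw [coe_componentAvoiding]
  exact (SimpleGraph.ConnectedComponent.connected_toSimpleGraph _).mono
    fun _ _ h => G.spanningCoe_induce_le _ h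

lemma disjoint_componentAvoiding (hv : v ∉ U) : Disjoint (componentAvoiding G U v) U := by
  rw [Finset.disjoint_left]
  intro w hw
  obtain ⟨p⟩ := (mem_componentAvoiding G).1 hw
  cases p with
  | nil => exact hv
  | cons h _ => simp_all

lemma mem_componentAvoiding_of_adj (hv : v ∉ U) {a b : V} (ha : a ∈ componentAvoiding G U v)
    (hb : b ∉ U) (hab : G.Adj a b) : b ∈ componentAvoiding G U v := by
  have ha' : a ∉ U := Finset.disjoint_left.1 (disjoint_componentAvoiding G hv) ha
  have hba : (G.induce (U : Set V)ᶜ).spanningCoe.Adj b a := by simp [ha', hb, hab.symm]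
  exact (mem_componentAvoiding G).2 (hba.reachable.trans ((mem_componentAvoiding G).1 ha))

end ComponentAvoiding

lemma degree_lt_card_of_regular {V : Type*} [Fintype V] [Nonempty V] {G : SimpleGraph V}
    [DecidableRel G.Adj] {Δ : ℕ} (hreg : G.IsRegularOfDegree Δ) : Δ < Fintype.card V :=
  hreg.minDegree_eq ▸ G.minDegree_lt_card

variable {V : Type*} [Fintype V] [DecidableEq V] (G : SimpleGraph V) [DecidableRel G.Adj]
  {S U : Finset V} {v : V} {i Δ : ℕ}

/-- The outer vertex boundary of `S`: the vertices outside `S` with a neighbor in `S`. -/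
def outerBoundary (S : Finset V) : Finset V :=
  {b ∈ Sᶜ | ∃ a ∈ S, G.Adj a b}

lemma disjoint_outerBoundary : Disjoint S (outerBoundary G S) :=
  disjoint_compl_right.mono_right (Finset.filter_subset _ _)

lemma outerBoundary_componentAvoiding (hU : U ⊆ G.neighborFinset v) :
    outerBoundary G (componentAvoiding G U v) = U := by
  have hv : v ∉ U := fun h => by simpa using hU h
  ext b
  simp only [outerBoundary, mem_filter, mem_compl]
  constructor
  · rintro ⟨hb, a, ha, hab⟩
    by_contra hbU
    exact hb (mem_componentAvoiding_of_adj G hv ha hbU hab)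
  · intro hb
    exact ⟨Finset.disjoint_right.1 (disjoint_componentAvoiding G hv) hb,
      v, self_mem_componentAvoiding G, by simpa using hU hb⟩

lemma degIn_add_degOut (S : Finset V) (v : V) : G.degIn S v + G.degOut S v = G.degree v := by
  rw [SimpleGraph.degIn, SimpleGraph.degOut, ← G.card_neighborFinset_eq_degree,
    G.neighborFinset_eq_filter, ← Finset.union_compl S, Finset.filter_union,
    Finset.card_union_of_disjoint (Finset.disjoint_filter_filter disjoint_compl_right)]

lemma degOut_le_card_outerBoundary (hv : v ∈ S) : G.degOut S v ≤ #(outerBoundary G S) :=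
  Finset.card_le_card <| Finset.monotone_filter_right _ fun _ _ h => ⟨v, hv, h⟩

lemma card_outerBoundary_le_degOut (hN : outerBoundary G S ⊆ G.neighborFinset v) :
    #(outerBoundary G S) ≤ G.degOut S v :=
  Finset.card_le_card fun b hb =>
    Finset.mem_filter.2 ⟨(Finset.mem_filter.1 hb).1, by simpa using hN hb⟩

lemma isExactAlliance_of_outerBoundary_subset (hS : (G.induce (S : Set V)).Connected) (hv : v ∈ S)
    (hdeg : ∀ w ∈ S, G.degree v ≤ G.degree w) (hN : outerBoundary G S ⊆ G.neighborFinset v) :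
    G.IsExactAlliance S (G.degree v - 2 * #(outerBoundary G S)) := by
  refine ⟨hS, fun w hw => ?_, v, hv, ?_⟩
  · have := degIn_add_degOut G S w
    have := degOut_le_card_outerBoundary G hw
    have := hdeg w hw
    lia
  · have := degIn_add_degOut G S v
    have := degOut_le_card_outerBoundary G hv
    have := card_outerBoundary_le_degOut G hN
    lia

lemma isExactAlliance_componentAvoiding (hv : G.degree v = G.minDegree)
    (hU : U ⊆ G.neighborFinset v) :
    G.IsExactAlliance (componentAvoiding G U v) (G.minDegree - 2 * #U) := by
  have hb := outerBoundary_componentAvoiding G hU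
  simpa only [hb, hv] using isExactAlliance_of_outerBoundary_subset G
    (connected_induce_componentAvoiding G) (self_mem_componentAvoiding G)
    (fun w _ => hv.trans_le (G.minDegree_le_degree w)) (hb.trans_subset hU)

lemma allianceCoeff_ne_zero_iff {k : ℤ} :
    G.allianceCoeff k ≠ 0 ↔ ∃ S, G.IsExactAlliance S k := by
  rw [SimpleGraph.allianceCoeff, ← Nat.pos_iff_ne_zero, Set.ncard_pos]
  rfl

lemma exists_eq_degree_sub_of_allianceCoeff_ne_zero {k : ℤ} (hk : G.allianceCoeff k ≠ 0) :
    ∃ v, ∃ j ≤ G.degree v, k = G.degree v - 2 * j := by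
  obtain ⟨S, -, -, v, -, hv⟩ := (allianceCoeff_ne_zero_iff G).1 hk
  have := degIn_add_degOut G S v
  exact ⟨v, G.degOut S v, by lia, by lia⟩

lemma allianceCoeff_minDegree_sub_ne_zero [Nonempty V] (hi : i ≤ G.minDegree) :
    G.allianceCoeff (G.minDegree - 2 * i) ≠ 0 := by
  obtain ⟨v, hv⟩ := G.exists_minimal_degree_vertex
  rw [hv, ← G.card_neighborFinset_eq_degree] at hi
  obtain ⟨U, hU, rfl⟩ := Finset.exists_subset_card_eq hi
  exact (allianceCoeff_ne_zero_iff G).2 ⟨_, isExactAlliance_componentAvoiding G hv.symm hU⟩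

lemma isExactAlliance_neg_maxDegree_iff :
    G.IsExactAlliance S (-G.maxDegree) ↔ ∃ v, G.degree v = G.maxDegree ∧ {v} = S := by
  constructor
  · rintro ⟨hS, -, v, hv, hk⟩
    have hsum := degIn_add_degOut G S v
    have hle := G.degree_le_maxDegree v
    have hIn : G.degIn S v = 0 := by lia
    refine ⟨v, by lia, ?_⟩
    by_contra hne
    have : Nontrivial S :=
      Set.nontrivial_coe_sort.2 ((Finset.nontrivial_iff_ne_singleton hv).2 (Ne.symm hne))
    obtain ⟨w, hw⟩ := hS.preconnected.exists_adj_of_nontrivial ⟨v, hv⟩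
    have hpos : 0 < G.degIn S v :=
      Finset.card_pos.2 ⟨w, Finset.mem_filter.2 ⟨w.2, hw⟩⟩
    lia
  · rintro ⟨v, hv, rfl⟩
    have hIn : G.degIn {v} v = 0 := by simp [SimpleGraph.degIn, Finset.filter_singleton]
    have hsum := degIn_add_degOut G {v} v
    refine ⟨?_, fun w hw => ?_, v, Finset.mem_singleton_self v, by lia⟩
    · rw [Finset.coe_singleton]
      exact .of_subsingleton
    · rw [Finset.mem_singleton.1 hw]
      lia

lemma allianceCoeff_neg_maxDegree :
    G.allianceCoeff (-G.maxDegree) = #{v | G.degree v = G.maxDegree} := by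
  have himage : {S | G.IsExactAlliance S (-G.maxDegree)} =
      (image singleton {v | G.degree v = G.maxDegree} : Finset (Finset V)) := by
    ext S
    simp [isExactAlliance_neg_maxDegree_iff]
  rw [SimpleGraph.allianceCoeff, himage, Set.ncard_coe_finset,
    Finset.card_image_of_injective _ Finset.singleton_injective]

lemma card_filter_outerBoundary_subset_le (hS : (outerBoundary G S).Nonempty) :
    #{v ∈ S | outerBoundary G S ⊆ G.neighborFinset v} ≤
      min G.maxDegree (Fintype.card V - #(outerBoundary G S)) := by
  refine le_min ?_ ?_
  · obtain ⟨u, hu⟩ := hS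
    refine le_trans (Finset.card_le_card fun v hv => ?_)
      ((G.card_neighborFinset_eq_degree u).trans_le (G.degree_le_maxDegree u))
    simpa [G.adj_comm] using (Finset.mem_filter.1 hv).2 hu
  · rw [← Finset.card_compl]
    exact Finset.card_le_card ((Finset.filter_subset _ _).trans
      (Finset.subset_compl_iff_disjoint_right.2 (disjoint_outerBoundary G)))

lemma card_filter_componentAvoiding_eq_le (P : Finset (Σ _ : V, Finset V))
    (hP : ∀ p ∈ P, p.2 ⊆ G.neighborFinset p.1) (S : Finset V) :
    #{p ∈ P | componentAvoiding G p.2 p.1 = S} ≤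
      #{v ∈ S | outerBoundary G S ⊆ G.neighborFinset v} := by
  have hboundary : ∀ p ∈ P, componentAvoiding G p.2 p.1 = S → outerBoundary G S = p.2 :=
    fun p hp hpS => hpS ▸ outerBoundary_componentAvoiding G (hP p hp)
  refine Finset.card_le_card_of_injOn Sigma.fst (fun p hp => ?_) fun p hp q hq hpq => ?_
  · obtain ⟨hp, hpS⟩ := Finset.mem_filter.1 hp
    refine Finset.mem_coe.2 (Finset.mem_filter.2 ⟨hpS ▸ self_mem_componentAvoiding G, ?_⟩)
    exact hboundary p hp hpS ▸ hP p hp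
  · obtain ⟨hp, hpS⟩ := Finset.mem_filter.1 hp
    obtain ⟨hq, hqS⟩ := Finset.mem_filter.1 hq
    exact Sigma.ext hpq (heq_of_eq ((hboundary p hp hpS).symm.trans (hboundary q hq hqS)))

lemma card_minDegree_mul_choose_le (hi : i ≠ 0) :
    #{v | G.degree v = G.minDegree} * G.minDegree.choose i ≤
      min G.maxDegree (Fintype.card V - i) * G.allianceCoeff (G.minDegree - 2 * i) := by
  let pairs : Finset (Σ _ : V, Finset V) :=
    ({v | G.degree v = G.minDegree} : Finset V).sigma fun v => (G.neighborFinset v).powersetCard i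
  let component (p : Σ _ : V, Finset V) : Finset V := componentAvoiding G p.2 p.1
  have hpairs : ∀ p ∈ pairs,
      G.degree p.1 = G.minDegree ∧ p.2 ⊆ G.neighborFinset p.1 ∧ #p.2 = i := fun p hp => by
    simpa [pairs, Finset.mem_powersetCard] using hp
  have hcard : #pairs = #{v | G.degree v = G.minDegree} * G.minDegree.choose i := by
    rw [Finset.card_sigma, Finset.sum_const_nat]
    simp +contextual
  have hfiber : ∀ S ∈ pairs.image component,
      #{p ∈ pairs | component p = S} ≤ min G.maxDegree (Fintype.card V - i) := by
    intro S hS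
    obtain ⟨q, hq, rfl⟩ := Finset.mem_image.1 hS
    obtain ⟨-, hU, hqi⟩ := hpairs q hq
    rw [← outerBoundary_componentAvoiding G hU] at hqi
    exact (card_filter_componentAvoiding_eq_le G pairs (fun p hp => (hpairs p hp).2.1) _).trans
      (hqi ▸ card_filter_outerBoundary_subset_le G (Finset.card_ne_zero.1 (hqi ▸ hi)))
  have himage : #(pairs.image component) ≤ G.allianceCoeff (G.minDegree - 2 * i) := by
    rw [← Set.ncard_coe_finset]
    refine Set.ncard_le_ncard fun S hS => ?_
    obtain ⟨p, hp, rfl⟩ := Finset.mem_image.1 hS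
    obtain ⟨hv, hU, rfl⟩ := hpairs p hp
    exact isExactAlliance_componentAvoiding G hv hU
  rw [← hcard]
  exact (Finset.card_le_mul_card_image pairs _ hfiber).trans (Nat.mul_le_mul_left _ himage)

lemma coeff_alliancePoly (m : ℕ) :
    G.alliancePoly.coeff m = G.allianceCoeff ((m : ℤ) - Fintype.card V) := by
  have hmax : G.maxDegree ≤ Fintype.card V :=
    G.maxDegree_le_of_forall_degree_le _ fun v => (G.degree_lt_card_verts v).le
  have hterm : ∀ k ∈ Finset.Icc (-(G.maxDegree : ℤ)) G.maxDegree,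
      ((G.allianceCoeff k : ℝ) • (X : ℝ[X]) ^ ((Fintype.card V : ℤ) + k).toNat).coeff m =
        if (m : ℤ) - Fintype.card V = k then (G.allianceCoeff k : ℝ) else 0 := by
    intro k hk
    have hexp : m = ((Fintype.card V : ℤ) + k).toNat ↔ (m : ℤ) - Fintype.card V = k := by
      rw [Finset.mem_Icc] at hk
      lia
    simp [Polynomial.coeff_X_pow, hexp]
  rw [SimpleGraph.alliancePoly, Polynomial.finsetSum_coeff, Finset.sum_congr rfl hterm,
    Finset.sum_ite_eq, ite_eq_left_iff]
  intro hm
  by_contra h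
  obtain ⟨v, j, hj, hmj⟩ := exists_eq_degree_sub_of_allianceCoeff_ne_zero G
    (Nat.cast_ne_zero.1 (Ne.symm h))
  have := G.degree_le_maxDegree v
  rw [Finset.mem_Icc] at hm
  lia

lemma injOn_toNat_add_sub_two_mul {n Δ : ℕ} (h : Δ ≤ n) :
    Set.InjOn (fun i : ℕ => ((n : ℤ) + Δ - 2 * i).toNat) (range (Δ + 1)) := by
  intro i hi j hj hij
  simp only [coe_range, Set.mem_Iio] at hi hj hij
  lia

section Regular

variable {G} [Nonempty V]

lemma allianceCoeff_ne_zero_iff_of_regular (hreg : G.IsRegularOfDegree Δ) {k : ℤ} :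
    G.allianceCoeff k ≠ 0 ↔ ∃ i ≤ Δ, k = Δ - 2 * i := by
  constructor
  · intro hk
    obtain ⟨v, i, hi⟩ := exists_eq_degree_sub_of_allianceCoeff_ne_zero G hk
    exact ⟨i, by rwa [hreg v] at hi⟩
  · rintro ⟨i, hi, rfl⟩
    rw [← hreg.minDegree_eq] at hi ⊢
    exact allianceCoeff_minDegree_sub_ne_zero G hi

lemma support_alliancePoly_of_regular (hreg : G.IsRegularOfDegree Δ) :
    G.alliancePoly.support =
      (range (Δ + 1)).image fun i : ℕ => ((Fintype.card V : ℤ) + Δ - 2 * i).toNat := by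
  have hcard := degree_lt_card_of_regular hreg
  ext m
  rw [Polynomial.mem_support_iff, coeff_alliancePoly, Nat.cast_ne_zero,
    allianceCoeff_ne_zero_iff_of_regular hreg, Finset.mem_image]
  refine exists_congr fun i => ?_
  rw [Finset.mem_range]
  lia

lemma alliancePoly_eq_sum_of_regular (hreg : G.IsRegularOfDegree Δ) :
    G.alliancePoly = ∑ i ∈ range (Δ + 1), (G.allianceCoeff ((Δ : ℤ) - 2 * i) : ℝ) •
      (X : ℝ[X]) ^ ((Fintype.card V : ℤ) + Δ - 2 * i).toNat := by
  have hcard := degree_lt_card_of_regular hreg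
  rw [G.alliancePoly.as_sum_support_C_mul_X_pow, support_alliancePoly_of_regular hreg,
    Finset.sum_image (injOn_toNat_add_sub_two_mul hcard.le)]
  refine Finset.sum_congr rfl fun i hi => ?_
  rw [Finset.mem_range] at hi
  have hindex : ((((Fintype.card V : ℤ) + Δ - 2 * i).toNat : ℕ) : ℤ) - Fintype.card V =
      Δ - 2 * i := by lia
  rw [coeff_alliancePoly, hindex, Polynomial.smul_eq_C_mul]

lemma card_mul_choose_div_le_of_regular (hreg : G.IsRegularOfDegree Δ) (hi : i ≠ 0) (hiΔ : i ≤ Δ) :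
    ((Fintype.card V : ℚ) * Δ.choose i) / min (Δ : ℚ) ((Fintype.card V : ℚ) - i) ≤
      G.allianceCoeff ((Δ : ℤ) - 2 * i) := by
  have hcard := degree_lt_card_of_regular hreg
  have hcount : Fintype.card V * Δ.choose i ≤
      min Δ (Fintype.card V - i) * G.allianceCoeff ((Δ : ℤ) - 2 * i) := by
    simpa [hreg.minDegree_eq, hreg.maxDegree_eq, hreg.degree_eq] using
      card_minDegree_mul_choose_le G hi
  have hmin : min (Δ : ℚ) ((Fintype.card V : ℚ) - i) = (min Δ (Fintype.card V - i) : ℕ) := by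
    rw [Nat.cast_min, Nat.cast_sub (by lia)]
  have hpos : 0 < min Δ (Fintype.card V - i) := by lia
  rw [hmin, div_le_iff₀' (by exact_mod_cast hpos)]
  exact_mod_cast hcount

end Regular

end DefensiveAlliance

/-- For a Δ-regular graph of order `n ≥ 1`, `A(G;x)` has exactly `Δ+1` nonzero
coefficients, `A(G;x) = Σ_{i=0}^{Δ} A_{Δ-2i}(G) x^{n+Δ-2i}`, `A_{-Δ}(G) = n`, `A_Δ(G) ≥ 1`,
and if `Δ > 0` then `A_{Δ-2i}(G) ≥ n·C(Δ,i)/min{Δ, n-i}` for `1 ≤ i ≤ Δ-1`. -/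
theorem alliancePoly_regular_form
    {V : Type*} [Fintype V] [DecidableEq V] [Nonempty V]
    (G : SimpleGraph V) [DecidableRel G.Adj] (Δ : ℕ)
    (hreg : G.IsRegularOfDegree Δ) :
    G.alliancePoly.support.card = Δ + 1 ∧
    G.alliancePoly = ∑ i ∈ Finset.range (Δ + 1),
      (G.allianceCoeff ((Δ : ℤ) - 2 * i) : ℝ) •
        (Polynomial.X : Polynomial ℝ) ^ (((Fintype.card V : ℤ) + (Δ : ℤ) - 2 * i).toNat) ∧
    G.allianceCoeff (-(Δ : ℤ)) = Fintype.card V ∧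
    1 ≤ G.allianceCoeff (Δ : ℤ) ∧
    (0 < Δ → ∀ i : ℕ, 1 ≤ i → i ≤ Δ - 1 →
      ((Fintype.card V : ℚ) * (Δ.choose i : ℚ)) / (min Δ (Fintype.card V - i) : ℚ) ≤
        (G.allianceCoeff ((Δ : ℤ) - 2 * i) : ℚ)) := by
  have hcard := DefensiveAlliance.degree_lt_card_of_regular hreg
  refine ⟨?_, DefensiveAlliance.alliancePoly_eq_sum_of_regular hreg, ?_, ?_, fun _ i hi hiΔ => ?_⟩
  · rw [DefensiveAlliance.support_alliancePoly_of_regular hreg, Finset.card_image_of_injOn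
      (DefensiveAlliance.injOn_toNat_add_sub_two_mul hcard.le), Finset.card_range]
  · simpa [hreg.maxDegree_eq, hreg.degree_eq] using DefensiveAlliance.allianceCoeff_neg_maxDegree G
  · exact Nat.one_le_iff_ne_zero.2
      ((DefensiveAlliance.allianceCoeff_ne_zero_iff_of_regular hreg).2 ⟨0, Nat.zero_le Δ, by simp⟩)
  · exact DefensiveAlliance.card_mul_choose_div_le_of_regular hreg (by lia) (by lia)
end

section
/- Let G be a Δ-regular connected finite simple graph of order n, and let G* be a finite simple graph of order n₁ with minimum degree δ₁ and maximum degree Δ₁. If A(G*;x) = A(G;x) as polynomials, then G* is connected, G* has exactly n vertices of degree Δ₁, Δ₁ = Δ + n₁ − n, n₁ ≥ n, Δ₁ ≥ Δ, and δ₁ ≡ Δ₁ (mod 2). Furthermore, if n₁ > n, then (Δ₁ + δ₁ + 2)/2 ≤ Δ, δ₁ + 2 < Δ < Δ₁, Δ + 1 ≤ Δ₁ ≤ 2Δ − 3, and δ₁ + 4 ≤ Δ₁. -/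
open Polynomial Finset

/-!
Comparing coefficients, `G*` has as many exact `k`-alliances as `G` has exact
`(k + n₁ - n)`-alliances. In any graph the alliances `S` with the smallest `k_S` are the singletons
of the vertices of maximum degree, which yields `Δ₁ - n₁ = Δ - n` and makes `n` the number of
vertices of degree `Δ₁`.

Let `M` be the set of these `n` vertices, so that `|Mᶜ| = n₁ - n = Δ₁ - Δ`. A component `⟨S⟩` of
`⟨M⟩` has all its outside neighbours in `Mᶜ`, hence `k_S ≥ Δ₁ - 2|Mᶜ| = 2Δ - Δ₁`, whereas no exact
alliance of `G*` exceeds this value because those of `G` do not exceed `Δ`. As `V(G)` is the only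
exact `Δ`-alliance of `G`, all components coincide: `⟨M⟩` is connected, and equality in the bound
gives a vertex of `M` adjacent to all of `Mᶜ`, so `G*` is connected. If `n₁ > n`, the whole vertex
set of `G*` is an exact `δ₁`-alliance different from `M`, so `δ₁ < 2Δ - Δ₁`, and by parity the gap
is at least 2.
-/

namespace Alliance

section Exponents

variable {V : Type*} [Fintype V] [DecidableEq V] {G : SimpleGraph V} [DecidableRel G.Adj]
  {S : Finset V} {k : ℤ} {u v : V}

lemma degIn_add_degOut (G : SimpleGraph V) [DecidableRel G.Adj] (S : Finset V) (v : V) :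
    G.degIn S v + G.degOut S v = G.degree v := by
  rw [SimpleGraph.degIn, SimpleGraph.degOut, ← G.card_neighborFinset_eq_degree,
    G.neighborFinset_eq_filter, ← card_union_of_disjoint
      (disjoint_filter_filter disjoint_compl_right), ← filter_union, union_compl]

lemma degIn_sub_degOut (G : SimpleGraph V) [DecidableRel G.Adj] (S : Finset V) (v : V) :
    (G.degIn S v : ℤ) - G.degOut S v = G.degree v - 2 * G.degOut S v := by
  have := degIn_add_degOut G S v
  omega

lemma degIn_pos (hS : (G.induce (S : Set V)).Connected) (hu : u ∈ S) (hv : v ∈ S) (huv : u ≠ v) :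
    0 < G.degIn S v := by
  have : Nontrivial (S : Set V) := ⟨⟨u, hu⟩, ⟨v, hv⟩, by simpa using huv⟩
  obtain ⟨w, hvw⟩ := hS.preconnected.exists_adj_of_nontrivial ⟨v, hv⟩
  exact card_pos.2 ⟨w, mem_filter.2 ⟨w.2, hvw⟩⟩

lemma adj_of_card_compl_le_degOut (h : #Sᶜ ≤ G.degOut S v) {w : V} (hw : w ∉ S) : G.Adj v w :=
  card_filter_eq_iff.1 (le_antisymm (card_filter_le _ _) h) w (mem_compl.2 hw)

lemma exists_eq_degree_sub_of_isExactAlliance (hS : G.IsExactAlliance S k) :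
    ∃ v ∈ S, k = G.degree v - 2 * G.degOut S v := by
  obtain ⟨-, -, v, hv, hvk⟩ := hS
  exact ⟨v, hv, by rw [← hvk, degIn_sub_degOut]⟩

lemma neg_maxDegree_le_of_isExactAlliance (hS : G.IsExactAlliance S k) :
    -(G.maxDegree : ℤ) ≤ k := by
  obtain ⟨-, -, v, -, rfl⟩ := hS
  have := degIn_add_degOut G S v
  have := G.degree_le_maxDegree v
  omega

lemma le_maxDegree_of_isExactAlliance (hS : G.IsExactAlliance S k) : k ≤ G.maxDegree := by
  obtain ⟨v, -, rfl⟩ := exists_eq_degree_sub_of_isExactAlliance hS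
  have := G.degree_le_maxDegree v
  omega

lemma exists_isExactAlliance (hS : (G.induce (S : Set V)).Connected) :
    ∃ k, G.IsExactAlliance S k := by
  obtain ⟨w, hw⟩ := hS.nonempty
  obtain ⟨v, hv, hmin⟩ := S.exists_min_image
    (fun v => (G.degIn S v : ℤ) - (G.degOut S v : ℤ)) ⟨w, hw⟩
  exact ⟨_, hS, hmin, v, hv, rfl⟩

lemma isExactAlliance_singleton (G : SimpleGraph V) [DecidableRel G.Adj] (v : V) :
    G.IsExactAlliance {v} (-(G.degree v : ℤ)) := by
  have hdegIn : G.degIn {v} v = 0 := by simp [SimpleGraph.degIn]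
  have := degIn_add_degOut G {v} v
  have hexp : (G.degIn {v} v : ℤ) - G.degOut {v} v = -(G.degree v : ℤ) := by omega
  refine ⟨?_, fun u hu => ?_, v, mem_singleton_self v, hexp⟩
  · rw [coe_singleton, G.induce_singleton_eq_top]
    exact SimpleGraph.connected_top
  · rw [mem_singleton.1 hu, hexp]

lemma isExactAlliance_univ (hG : G.Connected) : G.IsExactAlliance univ (G.minDegree : ℤ) := by
  have := hG.nonempty
  have hexp (u : V) : (G.degIn univ u : ℤ) - G.degOut univ u = G.degree u := by
    have hdegOut : G.degOut univ u = 0 := by simp [SimpleGraph.degOut]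
    rw [degIn_sub_degOut, hdegOut, Nat.cast_zero, mul_zero, sub_zero]
  obtain ⟨v, hv⟩ := G.exists_minimal_degree_vertex
  refine ⟨?_, fun u _ => ?_, v, mem_univ v, ?_⟩
  · rw [coe_univ]
    exact (SimpleGraph.induceUnivIso G).connected_iff.2 hG
  · rw [hexp]
    exact_mod_cast G.minDegree_le_degree u
  · rw [hexp, hv]

lemma eq_univ_of_isExactAlliance_maxDegree (hG : G.Connected)
    (hS : G.IsExactAlliance S G.maxDegree) : S = univ := by
  obtain ⟨-, hle, u, hu, -⟩ := hS
  by_contra hne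
  obtain ⟨w, hw⟩ : ∃ w, w ∉ S := by simpa [eq_univ_iff_forall] using hne
  obtain ⟨p⟩ := hG.preconnected u w
  obtain ⟨d, -, hfst, hsnd⟩ := p.exists_boundary_dart (S : Set V) hu hw
  have hpos : 0 < G.degOut S d.fst :=
    card_pos.2 ⟨d.snd, mem_filter.2 ⟨mem_compl.2 hsnd, d.adj⟩⟩
  have := hle d.fst hfst
  have := degIn_add_degOut G S d.fst
  have := G.degree_le_maxDegree d.fst
  omega

end Exponents

section MaxDegree

variable {V : Type*} [Fintype V] {G : SimpleGraph V} [DecidableRel G.Adj]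

/-- The set of vertices of maximum degree of a finite graph. -/
def maxDegreeVerts (G : SimpleGraph V) [DecidableRel G.Adj] : Finset V :=
  {v | G.degree v = G.maxDegree}

lemma mem_maxDegreeVerts {v : V} : v ∈ maxDegreeVerts G ↔ G.degree v = G.maxDegree := by
  simp [maxDegreeVerts]

lemma maxDegreeVerts_eq_univ_of_isRegularOfDegree [Nonempty V] {d : ℕ}
    (hG : G.IsRegularOfDegree d) : maxDegreeVerts G = univ := by
  ext v
  simp [mem_maxDegreeVerts, hG.degree_eq, hG.maxDegree_eq]

lemma maxDegreeVerts_nonempty [Nonempty V] (G : SimpleGraph V) [DecidableRel G.Adj] :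
    (maxDegreeVerts G).Nonempty := by
  obtain ⟨v, hv⟩ := G.exists_maximal_degree_vertex
  exact ⟨v, mem_maxDegreeVerts.2 hv.symm⟩

lemma maxDegree_le_card (G : SimpleGraph V) [DecidableRel G.Adj] :
    G.maxDegree ≤ Fintype.card V :=
  G.maxDegree_le_of_forall_degree_le _ fun v => (G.degree_lt_card_verts v).le

end MaxDegree

section Coefficients

variable {V : Type*} [Fintype V] [DecidableEq V] {G : SimpleGraph V} [DecidableRel G.Adj] {k : ℤ}

lemma allianceCoeff_ne_zero_iff : G.allianceCoeff k ≠ 0 ↔ ∃ S, G.IsExactAlliance S k := by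
  rw [← Nat.pos_iff_ne_zero, SimpleGraph.allianceCoeff, Set.ncard_pos (Set.toFinite _)]
  rfl

lemma allianceCoeff_le_one_iff :
    G.allianceCoeff k ≤ 1 ↔
      ∀ S, G.IsExactAlliance S k → ∀ T, G.IsExactAlliance T k → S = T :=
  Set.ncard_le_one (Set.toFinite _)

lemma allianceCoeff_eq_zero_of_notMem_Icc
    (hk : k ∉ Icc (-(G.maxDegree : ℤ)) (G.maxDegree : ℤ)) : G.allianceCoeff k = 0 := by
  contrapose! hk
  obtain ⟨S, hS⟩ := allianceCoeff_ne_zero_iff.1 hk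
  exact mem_Icc.2 ⟨neg_maxDegree_le_of_isExactAlliance hS, le_maxDegree_of_isExactAlliance hS⟩

lemma allianceCoeff_maxDegree_le_one (hG : G.Connected) : G.allianceCoeff G.maxDegree ≤ 1 :=
  allianceCoeff_le_one_iff.2 fun _ hS _ hT =>
    (eq_univ_of_isExactAlliance_maxDegree hG hS).trans
      (eq_univ_of_isExactAlliance_maxDegree hG hT).symm

lemma isExactAlliance_neg_maxDegree_iff {S : Finset V} :
    G.IsExactAlliance S (-(G.maxDegree : ℤ)) ↔ ∃ v ∈ maxDegreeVerts G, {v} = S := by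
  constructor
  · rintro ⟨hconn, -, v, hv, hvk⟩
    have := degIn_add_degOut G S v
    have := G.degree_le_maxDegree v
    have hdegIn : G.degIn S v = 0 := by omega
    refine ⟨v, mem_maxDegreeVerts.2 (by omega), (eq_singleton_iff_unique_mem.2 ⟨hv, ?_⟩).symm⟩
    intro u hu
    by_contra huv
    exact (degIn_pos hconn hu hv huv).ne' hdegIn
  · rintro ⟨v, hv, rfl⟩
    rw [← mem_maxDegreeVerts.1 hv]
    exact isExactAlliance_singleton G v

lemma allianceCoeff_neg_maxDegree (G : SimpleGraph V) [DecidableRel G.Adj] :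
    G.allianceCoeff (-(G.maxDegree : ℤ)) = #(maxDegreeVerts G) := by
  have hset : {S : Finset V | G.IsExactAlliance S (-(G.maxDegree : ℤ))} =
      (fun v => {v}) '' (maxDegreeVerts G : Set V) :=
    Set.ext fun _ => isExactAlliance_neg_maxDegree_iff
  rw [SimpleGraph.allianceCoeff, hset, Set.ncard_image_of_injective _ singleton_injective,
    Set.ncard_coe_finset]

-- Since `Δ ≤ n`, the truncation `toNat` in the definition of the polynomial never takes effect.
lemma coeff_alliancePoly (G : SimpleGraph V) [DecidableRel G.Adj] (m : ℕ) :
    G.alliancePoly.coeff m = G.allianceCoeff ((m : ℤ) - Fintype.card V) := by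
  have hle := maxDegree_le_card G
  simp only [SimpleGraph.alliancePoly, finsetSum_coeff, coeff_smul, coeff_X_pow, smul_eq_mul,
    mul_ite, mul_one, mul_zero]
  rw [sum_eq_single ((m : ℤ) - Fintype.card V), if_pos (by omega)]
  · intro k hk hne
    rw [mem_Icc] at hk
    exact if_neg (by omega)
  · intro hout
    rw [if_pos (by omega), allianceCoeff_eq_zero_of_notMem_Icc hout, Nat.cast_zero]

end Coefficients

section Components

variable {V : Type*} {G : SimpleGraph V} {M S : Finset V} {v w : V}

/-- `S` is (the vertex set of) a connected component of the subgraph induced by `M`, expressed as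
a maximal subset of `M` that induces a connected subgraph of `G`. -/
def IsComponentOf (G : SimpleGraph V) (M S : Finset V) : Prop :=
  Maximal (fun T : Finset V => T ⊆ M ∧ (G.induce (T : Set V)).Connected) S

lemma exists_isComponentOf_mem (G : SimpleGraph V) (hv : v ∈ M) :
    ∃ S, IsComponentOf G M S ∧ v ∈ S := by
  have hfin : {T : Finset V | T ⊆ M ∧ (G.induce (T : Set V)).Connected}.Finite :=
    M.powerset.finite_toSet.subset fun T hT => mem_coe.2 (mem_powerset.2 hT.1)
  have hsingle : {v} ⊆ M ∧ (G.induce (({v} : Finset V) : Set V)).Connected := by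
    rw [coe_singleton, G.induce_singleton_eq_top]
    exact ⟨singleton_subset_iff.2 hv, SimpleGraph.connected_top⟩
  obtain ⟨S, hvS, hS⟩ := hfin.exists_le_maximal hsingle
  exact ⟨S, hS, hvS (mem_singleton_self v)⟩

lemma IsComponentOf.subset (hS : IsComponentOf G M S) : S ⊆ M := hS.prop.1

lemma IsComponentOf.connected (hS : IsComponentOf G M S) : (G.induce (S : Set V)).Connected :=
  hS.prop.2

lemma IsComponentOf.mem_of_adj (hS : IsComponentOf G M S) (hv : v ∈ S) (hw : w ∈ M)
    (hvw : G.Adj v w) : w ∈ S := by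
  classical
  have hconn : (G.induce ((S ∪ {w} : Finset V) : Set V)).Connected := by
    rw [coe_union, coe_singleton]
    refine SimpleGraph.connected_induce_union hS.connected.preconnected ?_ hv rfl hvw
    exact SimpleGraph.Preconnected.of_subsingleton
  exact hS.le_of_ge ⟨union_subset hS.subset (singleton_subset_iff.2 hw), hconn⟩
    subset_union_left (mem_union_right _ (mem_singleton_self w))

lemma connected_of_forall_notMem_adj {S : Set V} (hS : (G.induce S).Connected) (hv : v ∈ S)
    (hadj : ∀ w ∉ S, G.Adj v w) : G.Connected := by
  rw [SimpleGraph.connected_iff_exists_forall_reachable]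
  refine ⟨v, fun w => ?_⟩
  by_cases hw : w ∈ S
  · exact (hS.preconnected ⟨v, hv⟩ ⟨w, hw⟩).map (SimpleGraph.Embedding.induce S).toHom
  · exact (hadj w hw).reachable

end Components

section EqualDegrees

variable {V : Type*} [Fintype V] [DecidableEq V] {G : SimpleGraph V} [DecidableRel G.Adj]
  {M S : Finset V} {v : V} {k : ℤ} {d : ℕ}

lemma IsComponentOf.degOut_le_card_compl (hS : IsComponentOf G M S) (hv : v ∈ S) :
    G.degOut S v ≤ #Mᶜ := by
  refine card_le_card fun w hw => ?_
  rw [mem_filter, mem_compl] at hw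
  exact mem_compl.2 fun hwM => hw.1 (hS.mem_of_adj hv hwM hw.2)

lemma IsComponentOf.sub_two_mul_card_compl_le (hS : IsComponentOf G M S)
    (hdeg : ∀ v ∈ M, G.degree v = d) (hk : G.IsExactAlliance S k) : (d : ℤ) - 2 * #Mᶜ ≤ k := by
  obtain ⟨v, hv, rfl⟩ := exists_eq_degree_sub_of_isExactAlliance hk
  have := hS.degOut_le_card_compl hv
  have := hdeg v (hS.subset hv)
  omega

lemma isExactAlliance_of_forall_le_of_allianceCoeff_le_one (hM : M.Nonempty)
    (hdeg : ∀ v ∈ M, G.degree v = d)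
    (hle : ∀ S k, G.IsExactAlliance S k → k ≤ (d : ℤ) - 2 * #Mᶜ)
    (hone : G.allianceCoeff ((d : ℤ) - 2 * #Mᶜ) ≤ 1) :
    G.IsExactAlliance M ((d : ℤ) - 2 * #Mᶜ) := by
  have hcomp : ∀ S, IsComponentOf G M S → G.IsExactAlliance S ((d : ℤ) - 2 * #Mᶜ) := by
    intro S hS
    obtain ⟨k, hk⟩ := exists_isExactAlliance hS.connected
    rwa [← le_antisymm (hle S k hk) (hS.sub_two_mul_card_compl_le hdeg hk)]
  obtain ⟨u, hu⟩ := hM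
  obtain ⟨S, hS, -⟩ := exists_isComponentOf_mem G hu
  have hMS : M ⊆ S := by
    intro v hv
    obtain ⟨T, hT, hvT⟩ := exists_isComponentOf_mem G hv
    rwa [allianceCoeff_le_one_iff.1 hone S (hcomp S hS) T (hcomp T hT)]
  obtain rfl : S = M := hS.subset.antisymm hMS
  exact hcomp S hS

lemma connected_of_isExactAlliance_sub_two_mul_card_compl (hdeg : ∀ v ∈ M, G.degree v = d)
    (hM : G.IsExactAlliance M ((d : ℤ) - 2 * #Mᶜ)) : G.Connected := by
  obtain ⟨v, hv, hvk⟩ := exists_eq_degree_sub_of_isExactAlliance hM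
  have := hdeg v hv
  exact connected_of_forall_notMem_adj hM.1 hv fun w hw =>
    adj_of_card_compl_le_degOut (by omega) hw

end EqualDegrees

section EqualPolynomials

variable {V W : Type*} [Fintype V] [DecidableEq V] [Fintype W] [DecidableEq W]
  {G : SimpleGraph V} [DecidableRel G.Adj] {H : SimpleGraph W} [DecidableRel H.Adj]
  {S : Finset W} {k : ℤ}

lemma allianceCoeff_sub_card_eq (h : H.alliancePoly = G.alliancePoly) (k : ℤ) :
    H.allianceCoeff (k - Fintype.card W) = G.allianceCoeff (k - Fintype.card V) := by
  obtain hk | hk := lt_or_ge k 0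
  · have := maxDegree_le_card G
    have := maxDegree_le_card H
    rw [allianceCoeff_eq_zero_of_notMem_Icc, allianceCoeff_eq_zero_of_notMem_Icc] <;>
      rw [mem_Icc] <;> omega
  · lift k to ℕ using hk
    have hcoeff := congrArg (coeff · k) h
    simp only [coeff_alliancePoly] at hcoeff
    exact_mod_cast hcoeff

lemma exists_isExactAlliance_of_alliancePoly_eq (h : H.alliancePoly = G.alliancePoly)
    (hS : H.IsExactAlliance S k) :
    ∃ T, G.IsExactAlliance T (k + Fintype.card W - Fintype.card V) := by
  rw [← allianceCoeff_ne_zero_iff, ← allianceCoeff_sub_card_eq h, add_sub_cancel_right]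
  exact allianceCoeff_ne_zero_iff.2 ⟨S, hS⟩

lemma nonempty_of_alliancePoly_eq [Nonempty V] (h : H.alliancePoly = G.alliancePoly) :
    Nonempty W := by
  obtain ⟨S, hS⟩ := exists_isExactAlliance_of_alliancePoly_eq h.symm
    (isExactAlliance_singleton G (Classical.arbitrary V))
  exact hS.1.nonempty.map Subtype.val

lemma maxDegree_sub_card_le [Nonempty W] (h : H.alliancePoly = G.alliancePoly) :
    (H.maxDegree : ℤ) - Fintype.card W ≤ G.maxDegree - Fintype.card V := by
  obtain ⟨v, hv⟩ := H.exists_maximal_degree_vertex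
  obtain ⟨T, hT⟩ := exists_isExactAlliance_of_alliancePoly_eq h (isExactAlliance_singleton H v)
  have := neg_maxDegree_le_of_isExactAlliance hT
  omega

lemma maxDegree_sub_card_eq [Nonempty V] (h : H.alliancePoly = G.alliancePoly) :
    (H.maxDegree : ℤ) - Fintype.card W = G.maxDegree - Fintype.card V :=
  have := nonempty_of_alliancePoly_eq h
  (maxDegree_sub_card_le h).antisymm (maxDegree_sub_card_le h.symm)

lemma card_maxDegreeVerts_eq [Nonempty V] (h : H.alliancePoly = G.alliancePoly) :
    #(maxDegreeVerts H) = #(maxDegreeVerts G) := by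
  have := maxDegree_sub_card_eq h
  rw [← allianceCoeff_neg_maxDegree, ← allianceCoeff_neg_maxDegree]
  convert allianceCoeff_sub_card_eq h (Fintype.card W - H.maxDegree) using 2 <;> omega

lemma degree_modEq_of_alliancePoly_eq (h : H.alliancePoly = G.alliancePoly)
    (hG : ∀ a b, G.degree a ≡ G.degree b [MOD 2]) (u v : W) :
    H.degree u ≡ H.degree v [MOD 2] := by
  have hparity (w : W) : ∃ a, ∃ m : ℕ,
      -(H.degree w : ℤ) + Fintype.card W - Fintype.card V = G.degree a - 2 * m := by
    obtain ⟨T, hT⟩ := exists_isExactAlliance_of_alliancePoly_eq h (isExactAlliance_singleton H w)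
    obtain ⟨a, -, ha⟩ := exists_eq_degree_sub_of_isExactAlliance hT
    exact ⟨a, _, ha⟩
  obtain ⟨a, m, ha⟩ := hparity u
  obtain ⟨b, l, hb⟩ := hparity v
  have hab := hG a b
  unfold Nat.ModEq at hab ⊢
  omega

end EqualPolynomials

section Regular

variable {V W : Type*} [Fintype V] [DecidableEq V] [Fintype W] [DecidableEq W]
  {G : SimpleGraph V} [DecidableRel G.Adj] {H : SimpleGraph W} [DecidableRel H.Adj] {Δ : ℕ}

lemma card_maxDegreeVerts_eq_card [Nonempty V] (hreg : G.IsRegularOfDegree Δ)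
    (h : H.alliancePoly = G.alliancePoly) : #(maxDegreeVerts H) = Fintype.card V := by
  rw [card_maxDegreeVerts_eq h, maxDegreeVerts_eq_univ_of_isRegularOfDegree hreg, card_univ]

lemma maxDegree_eq_add_sub [Nonempty V] (hreg : G.IsRegularOfDegree Δ)
    (h : H.alliancePoly = G.alliancePoly) :
    (H.maxDegree : ℤ) = Δ + Fintype.card W - Fintype.card V := by
  have := maxDegree_sub_card_eq h
  rw [hreg.maxDegree_eq] at this
  omega

lemma minDegree_modEq_maxDegree [Nonempty W] (hreg : G.IsRegularOfDegree Δ)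
    (h : H.alliancePoly = G.alliancePoly) :
    H.minDegree ≡ H.maxDegree [MOD 2] := by
  obtain ⟨u, hu⟩ := H.exists_minimal_degree_vertex
  obtain ⟨v, hv⟩ := H.exists_maximal_degree_vertex
  rw [hu, hv]
  refine degree_modEq_of_alliancePoly_eq h (fun a b => ?_) u v
  rw [hreg.degree_eq, hreg.degree_eq]

lemma maxDegree_sub_two_mul_card_compl [Nonempty V] (hreg : G.IsRegularOfDegree Δ)
    (h : H.alliancePoly = G.alliancePoly) :
    (H.maxDegree : ℤ) - 2 * #(maxDegreeVerts H)ᶜ = 2 * Δ - H.maxDegree := by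
  have := maxDegree_eq_add_sub hreg h
  have := card_maxDegreeVerts_eq_card hreg h
  have := card_add_card_compl (maxDegreeVerts H)
  omega

lemma le_two_mul_sub_maxDegree_of_isExactAlliance [Nonempty V] (hreg : G.IsRegularOfDegree Δ)
    (h : H.alliancePoly = G.alliancePoly) {S : Finset W} {k : ℤ} (hS : H.IsExactAlliance S k) :
    k ≤ 2 * Δ - H.maxDegree := by
  obtain ⟨T, hT⟩ := exists_isExactAlliance_of_alliancePoly_eq h hS
  have := le_maxDegree_of_isExactAlliance hT
  have := hreg.maxDegree_eq
  have := maxDegree_eq_add_sub hreg h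
  omega

lemma allianceCoeff_two_mul_sub_maxDegree_le_one (hreg : G.IsRegularOfDegree Δ)
    (hconn : G.Connected) (h : H.alliancePoly = G.alliancePoly) :
    H.allianceCoeff (2 * Δ - H.maxDegree) ≤ 1 := by
  have := hconn.nonempty
  have hmax := maxDegree_eq_add_sub hreg h
  calc
    H.allianceCoeff (2 * Δ - H.maxDegree)
      = H.allianceCoeff ((Δ + Fintype.card V : ℤ) - Fintype.card W) := by rw [hmax]; ring_nf
    _ = G.allianceCoeff G.maxDegree := by
      rw [allianceCoeff_sub_card_eq h, add_sub_cancel_right, hreg.maxDegree_eq]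
    _ ≤ 1 := allianceCoeff_maxDegree_le_one hconn

lemma isExactAlliance_maxDegreeVerts (hreg : G.IsRegularOfDegree Δ) (hconn : G.Connected)
    (h : H.alliancePoly = G.alliancePoly) :
    H.IsExactAlliance (maxDegreeVerts H) (2 * Δ - H.maxDegree) := by
  have := hconn.nonempty
  have := nonempty_of_alliancePoly_eq h
  rw [← maxDegree_sub_two_mul_card_compl hreg h]
  refine isExactAlliance_of_forall_le_of_allianceCoeff_le_one (maxDegreeVerts_nonempty H)
    (fun v => mem_maxDegreeVerts.1) (fun S k hS => ?_) ?_ <;>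
    rw [maxDegree_sub_two_mul_card_compl hreg h]
  · exact le_two_mul_sub_maxDegree_of_isExactAlliance hreg h hS
  · exact allianceCoeff_two_mul_sub_maxDegree_le_one hreg hconn h

lemma connected_of_alliancePoly_eq (hreg : G.IsRegularOfDegree Δ) (hconn : G.Connected)
    (h : H.alliancePoly = G.alliancePoly) : H.Connected := by
  have := hconn.nonempty
  have hM := isExactAlliance_maxDegreeVerts hreg hconn h
  rw [← maxDegree_sub_two_mul_card_compl hreg h] at hM
  exact connected_of_isExactAlliance_sub_two_mul_card_compl (fun v => mem_maxDegreeVerts.1) hM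

lemma maxDegree_add_minDegree_add_two_le (hreg : G.IsRegularOfDegree Δ) (hconn : G.Connected)
    (h : H.alliancePoly = G.alliancePoly) (hlt : Fintype.card V < Fintype.card W) :
    H.maxDegree + H.minDegree + 2 ≤ 2 * Δ := by
  have := hconn.nonempty
  have := nonempty_of_alliancePoly_eq h
  have huniv := isExactAlliance_univ (connected_of_alliancePoly_eq hreg hconn h)
  have hne : (H.minDegree : ℤ) ≠ 2 * Δ - H.maxDegree := by
    intro heq
    rw [heq] at huniv
    have hM : maxDegreeVerts H = univ :=
      allianceCoeff_le_one_iff.1 (allianceCoeff_two_mul_sub_maxDegree_le_one hreg hconn h) _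
        (isExactAlliance_maxDegreeVerts hreg hconn h) _ huniv
    have hcard := card_maxDegreeVerts_eq_card hreg h
    rw [hM, card_univ] at hcard
    exact hlt.ne' hcard
  have hle := le_two_mul_sub_maxDegree_of_isExactAlliance hreg h huniv
  have hparity := minDegree_modEq_maxDegree hreg h
  unfold Nat.ModEq at hparity
  omega

end Regular

end Alliance

open Alliance

/-- If a graph `G*` (order `n₁`, min degree `δ₁`, max degree `Δ₁`) has the same
alliance polynomial as a connected Δ-regular graph `G` of order `n`, then `G*` is connected
with exactly `n` vertices of degree `Δ₁`, `Δ₁ = Δ + n₁ - n`, `n₁ ≥ n`, `Δ₁ ≥ Δ`,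
`δ₁ ≡ Δ₁ (mod 2)`, and if moreover `n₁ > n` then `(Δ₁+δ₁+2)/2 ≤ Δ`, `δ₁+2 < Δ < Δ₁`,
`Δ+1 ≤ Δ₁ ≤ 2Δ-3` and `δ₁+4 ≤ Δ₁`. -/
theorem alliancePoly_eq_regular_connected_characterization
    {V W : Type*} [Fintype V] [DecidableEq V] [Fintype W] [DecidableEq W]
    (G : SimpleGraph V) [DecidableRel G.Adj] (Δ : ℕ)
    (hreg : G.IsRegularOfDegree Δ) (hconn : G.Connected)
    (Gs : SimpleGraph W) [DecidableRel Gs.Adj]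
    (h : Gs.alliancePoly = G.alliancePoly) :
    Gs.Connected ∧
    (Finset.univ.filter (fun v : W => Gs.degree v = Gs.maxDegree)).card = Fintype.card V ∧
    (Gs.maxDegree : ℤ) = (Δ : ℤ) + (Fintype.card W : ℤ) - (Fintype.card V : ℤ) ∧
    Fintype.card V ≤ Fintype.card W ∧
    Δ ≤ Gs.maxDegree ∧
    Gs.minDegree ≡ Gs.maxDegree [MOD 2] ∧
    (Fintype.card V < Fintype.card W →
      ((Gs.maxDegree : ℚ) + (Gs.minDegree : ℚ) + 2) / 2 ≤ (Δ : ℚ) ∧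
      Gs.minDegree + 2 < Δ ∧ Δ < Gs.maxDegree ∧
      Δ + 1 ≤ Gs.maxDegree ∧ (Gs.maxDegree : ℤ) ≤ 2 * (Δ : ℤ) - 3 ∧
      Gs.minDegree + 4 ≤ Gs.maxDegree) := by
  have := hconn.nonempty
  have := nonempty_of_alliancePoly_eq h
  have hGs := connected_of_alliancePoly_eq hreg hconn h
  have hcard := card_maxDegreeVerts_eq_card hreg h
  have hmax := maxDegree_eq_add_sub hreg h
  have hle : Fintype.card V ≤ Fintype.card W := hcard ▸ card_le_univ (maxDegreeVerts Gs)
  refine ⟨hGs, hcard, hmax, hle, by omega, minDegree_modEq_maxDegree hreg h, fun hlt => ?_⟩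
  have : Nontrivial W := Fintype.one_lt_card_iff_nontrivial.1 (lt_of_le_of_lt Fintype.card_pos hlt)
  have hpos : 0 < Gs.minDegree := hGs.preconnected.minDegree_pos_of_nontrivial
  have hsum := maxDegree_add_minDegree_add_two_le hreg hconn h hlt
  have hsumQ : (Gs.maxDegree : ℚ) + Gs.minDegree + 2 ≤ 2 * Δ := by exact_mod_cast hsum
  refine ⟨by linarith, ?_, ?_, ?_, ?_, ?_⟩ <;> omega
end
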